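/- Let Q(t) be a discrete time queue with Q(t+1) = max[Q(t) − b(t), 0] + a(t), where a(t) ≥ 0 and b(t) is real-valued, defined on a probability space. Suppose Q(t) is rate stable, and suppose there exist finite constants ε > 0 and C > 0 such that E[(a(t) + b⁻(t))^{1+ε}] ≤ C for all t, where b⁻(t) = −min[b(t), 0]. Then Q(t) is mean rate stable. -/

import Mathlib

open MeasureTheory Filter Finset ENNReal

/-!
A queue grows by at most `a t + b⁻ t` per slot, so `Q t / t` is dominated by `Q 0` plus the Cesàro
average of these bounds. A uniform moment bound of order above one makes the bounds uniformly
integrable, and uniform integrability passes to averages and to dominated families. Vitali's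
theorem then upgrades the almost sure convergence `Q t / t → 0` to convergence in `L¹`.
-/

section UniformIntegrability

variable {Ω ι E F : Type*} [MeasurableSpace Ω] {μ : Measure Ω}
  [NormedAddCommGroup E] [NormedAddCommGroup F] {p q : ℝ≥0∞}

theorem unifIntegrable_of_norm_le {f : ι → Ω → E} {g : ι → Ω → F} (hg : UnifIntegrable g p μ)
    (hfg : ∀ i, ∀ᵐ ω ∂μ, ‖f i ω‖ ≤ ‖g i ω‖) : UnifIntegrable f p μ := by
  intro ε hε
  obtain ⟨δ, hδ, hgδ⟩ := hg hε
  refine ⟨δ, hδ, fun i s hs hμs => le_trans ?_ (hgδ i s hs hμs)⟩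
  simp only [eLpNorm_indicator_eq_eLpNorm_restrict hs]
  exact eLpNorm_mono_ae (ae_restrict_of_ae (hfg i))

theorem one_div_toReal_sub_one_div_toReal_pos (hp : p ≠ 0) (hpq : p < q) :
    0 < 1 / p.toReal - 1 / q.toReal := by
  have hp_pos : 0 < p.toReal := toReal_pos hp hpq.ne_top
  rcases eq_or_ne q ∞ with rfl | hq
  · simpa using hp_pos
  · exact sub_pos.2 (one_div_lt_one_div_of_lt hp_pos (toReal_strict_mono hq hpq))

theorem unifIntegrable_of_eLpNorm_le (hp : p ≠ 0) (hpq : p < q) {f : ι → Ω → E}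
    (hf : ∀ i, AEStronglyMeasurable (f i) μ) {C : ℝ≥0∞} (hC : C ≠ ∞)
    (hfC : ∀ i, eLpNorm (f i) q μ ≤ C) : UnifIntegrable f p μ := by
  intro ε hε
  set r : ℝ := 1 / p.toReal - 1 / q.toReal
  have hr : 0 < r := one_div_toReal_sub_one_div_toReal_pos hp hpq
  have hlim : Tendsto (fun δ : ℝ => C * ENNReal.ofReal δ ^ r) (nhdsWithin 0 (Set.Ioi 0))
      (nhds 0) := by
    have hcont : Continuous fun δ : ℝ => C * ENNReal.ofReal δ ^ r :=
      (ENNReal.continuous_const_mul hC).comp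
        (ENNReal.continuous_rpow_const.comp ENNReal.continuous_ofReal)
    simpa [hr] using hcont.continuousWithinAt.tendsto (x := (0 : ℝ)) (s := Set.Ioi 0)
  obtain ⟨δ, hδε, hδ⟩ := ((ENNReal.tendsto_nhds_zero.1 hlim _ (ofReal_pos.2 hε)).and
    self_mem_nhdsWithin).exists
  refine ⟨δ, hδ, fun i s hs hμs => ?_⟩
  calc eLpNorm (s.indicator (f i)) p μ
      = eLpNorm (f i) p (μ.restrict s) := eLpNorm_indicator_eq_eLpNorm_restrict hs
    _ ≤ eLpNorm (f i) q (μ.restrict s) * μ.restrict s Set.univ ^ r :=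
        eLpNorm_le_eLpNorm_mul_rpow_measure_univ hpq.le (hf i).restrict
    _ ≤ C * ENNReal.ofReal δ ^ r := by
        rw [Measure.restrict_apply_univ]
        gcongr
        exact (eLpNorm_restrict_le _ _ _ _).trans (hfC i)
    _ ≤ ENNReal.ofReal ε := hδε

theorem uniformIntegrable_of_eLpNorm_le [IsFiniteMeasure μ] (hp : p ≠ 0) (hpq : p < q)
    {f : ι → Ω → E} (hf : ∀ i, AEStronglyMeasurable (f i) μ) {C : ℝ≥0∞} (hC : C ≠ ∞)
    (hfC : ∀ i, eLpNorm (f i) q μ ≤ C) : UniformIntegrable f p μ := by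
  refine ⟨hf, unifIntegrable_of_eLpNorm_le hp hpq hf hC hfC, ?_⟩
  set K : ℝ≥0∞ := C * μ Set.univ ^ (1 / p.toReal - 1 / q.toReal)
  have hK : K ≠ ∞ := mul_ne_top hC (rpow_ne_top_of_nonneg
    (one_div_toReal_sub_one_div_toReal_pos hp hpq).le (measure_ne_top μ _))
  refine ⟨K.toNNReal, fun i => ?_⟩
  rw [coe_toNNReal hK]
  exact (eLpNorm_le_eLpNorm_mul_rpow_measure_univ hpq.le (hf i)).trans (mul_le_mul' (hfC i) le_rfl)

theorem eLpNorm_ofReal_le_of_lintegral_rpow_norm_le {f : Ω → E} {r : ℝ} (hr : 0 < r) {C : ℝ≥0∞}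
    (hfC : ∫⁻ ω, ENNReal.ofReal (‖f ω‖ ^ r) ∂μ ≤ C) :
    eLpNorm f (ENNReal.ofReal r) μ ≤ C ^ (1 / r) := by
  rw [eLpNorm_eq_lintegral_rpow_enorm_toReal (ofReal_pos.2 hr).ne' ofReal_ne_top,
    toReal_ofReal hr.le]
  simp only [← ofReal_rpow_of_nonneg (norm_nonneg _) hr.le, ofReal_norm] at hfC
  gcongr

theorem uniformIntegrable_of_lintegral_rpow_norm_le [IsFiniteMeasure μ] {r : ℝ} (hp : p ≠ 0)
    (hpr : p < ENNReal.ofReal r) {f : ι → Ω → E} (hf : ∀ i, AEStronglyMeasurable (f i) μ)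
    {C : ℝ≥0∞} (hC : C ≠ ∞) (hfC : ∀ i, ∫⁻ ω, ENNReal.ofReal (‖f i ω‖ ^ r) ∂μ ≤ C) :
    UniformIntegrable f p μ := by
  have hr : 0 < r := ofReal_pos.1 (pos_of_gt hpr)
  exact uniformIntegrable_of_eLpNorm_le hp hpr hf
    (rpow_ne_top_of_nonneg (one_div_nonneg.2 hr.le) hC)
    fun i => eLpNorm_ofReal_le_of_lintegral_rpow_norm_le hr (hfC i)

theorem lintegral_ofReal_div_le_eLpNorm_one (f : Ω → ℝ) {c : ℝ} (hc : 0 < c) :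
    (∫⁻ ω, ENNReal.ofReal (f ω) ∂μ) / ENNReal.ofReal c ≤ eLpNorm (fun ω => f ω / c) 1 μ := by
  have hc_inv : (ENNReal.ofReal c)⁻¹ ≠ ∞ := inv_ne_top.2 (ofReal_pos.2 hc).ne'
  calc (∫⁻ ω, ENNReal.ofReal (f ω) ∂μ) / ENNReal.ofReal c
      = ∫⁻ ω, ENNReal.ofReal (f ω / c) ∂μ := by
        simp only [ofReal_div_of_pos hc]
        simp only [div_eq_mul_inv, lintegral_mul_const' _ _ hc_inv]
    _ ≤ ∫⁻ ω, ‖f ω / c‖ₑ ∂μ := lintegral_mono fun ω => Real.ofReal_le_enorm _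
    _ = eLpNorm (fun ω => f ω / c) 1 μ := eLpNorm_one_eq_lintegral_enorm.symm

end UniformIntegrability

/-- The recursion satisfied by a sample path `q` of a discrete time queue with arrivals `a` and
offered service `b`; the initial backlog `q 0` is left free. -/
def IsQueuePath (q a b : ℕ → ℝ) : Prop :=
  ∀ t, q (t + 1) = max (q t - b t) 0 + a t

namespace IsQueuePath

variable {q a b : ℕ → ℝ}

theorem nonneg (h : IsQueuePath q a b) (h0 : 0 ≤ q 0) (ha : ∀ t, 0 ≤ a t) (t : ℕ) : 0 ≤ q t := by
  cases t with
  | zero => exact h0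
  | succ t => exact (add_nonneg (le_max_right _ _) (ha t)).trans_eq (h t).symm

theorem succ_le (h : IsQueuePath q a b) {t : ℕ} (ht : 0 ≤ q t) :
    q (t + 1) ≤ q t + (a t - min (b t) 0) := by
  have hserve : max (q t - b t) 0 ≤ q t - min (b t) 0 :=
    max_le (sub_le_sub_left (min_le_left _ _) _)
      (sub_nonneg.2 ((min_le_right _ _).trans ht))
  linarith [h t]

theorem le_add_sum (h : IsQueuePath q a b) (h0 : 0 ≤ q 0) (ha : ∀ t, 0 ≤ a t) (t : ℕ) :
    q t ≤ q 0 + ∑ i ∈ range t, (a i - min (b i) 0) := by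
  induction t with
  | zero => simp
  | succ t ih =>
    rw [sum_range_succ]
    linarith [h.succ_le (h.nonneg h0 ha t)]

theorem div_le_add_average (h : IsQueuePath q a b) (h0 : 0 ≤ q 0) (ha : ∀ t, 0 ≤ a t) (t : ℕ) :
    q t / t ≤ q 0 + (∑ i ∈ range t, (a i - min (b i) 0)) / t := by
  rcases t.eq_zero_or_pos with rfl | ht
  · simpa using h0
  · have ht_one : (1 : ℝ) ≤ t := Nat.one_le_cast.2 ht
    calc q t / t ≤ (q 0 + ∑ i ∈ range t, (a i - min (b i) 0)) / t := by
          gcongr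
          exact h.le_add_sum h0 ha t
      _ = q 0 / t + (∑ i ∈ range t, (a i - min (b i) 0)) / t := add_div _ _ _
      _ ≤ q 0 + (∑ i ∈ range t, (a i - min (b i) 0)) / t := by
          gcongr
          exact div_le_self h0 ht_one

end IsQueuePath

section Stability

variable {Ω : Type*} [MeasurableSpace Ω] {μ : Measure Ω} {Q a b : ℕ → Ω → ℝ}

/-- Rate stability of a process: `Q t / t → 0` almost surely. -/
def RateStable (Q : ℕ → Ω → ℝ) (μ : Measure Ω) : Prop :=
  ∀ᵐ ω ∂μ, Tendsto (fun t : ℕ => Q t ω / t) atTop (nhds 0)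

/-- Mean rate stability of a nonnegative process: `E[Q t] / t → 0`. The expectation is a lower
integral, so that an infinite mean is not read as `0`. -/
def MeanRateStable (Q : ℕ → Ω → ℝ) (μ : Measure Ω) : Prop :=
  Tendsto (fun t : ℕ => (∫⁻ ω, ENNReal.ofReal (Q t ω) ∂μ) / (t : ℝ≥0∞)) atTop (nhds 0)

theorem RateStable.meanRateStable [IsFiniteMeasure μ] (hrate : RateStable Q μ)
    (hQ : ∀ t, AEStronglyMeasurable (Q t) μ)
    (hui : UnifIntegrable (fun (t : ℕ) ω => Q t ω / t) 1 μ) : MeanRateStable Q μ := by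
  have hQ_div : ∀ t : ℕ, AEStronglyMeasurable (fun ω => Q t ω / t) μ := fun t => by
    simpa only [div_eq_mul_inv] using (hQ t).mul_const (t : ℝ)⁻¹
  have hvitali : Tendsto (fun t : ℕ => eLpNorm (fun ω => Q t ω / t) 1 μ) atTop (nhds 0) := by
    simpa only [Pi.sub_def, sub_zero] using tendsto_Lp_finite_of_tendsto_ae le_rfl one_ne_top
      hQ_div (MemLp.zero' (ε := ℝ)) hui hrate
  refine tendsto_of_tendsto_of_tendsto_of_le_of_le' tendsto_const_nhds hvitali
    (Eventually.of_forall fun _ => zero_le) ?_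
  filter_upwards [eventually_gt_atTop 0] with t ht
  simpa only [ofReal_natCast] using
    lintegral_ofReal_div_le_eLpNorm_one (Q t) (Nat.cast_pos.2 ht)

theorem unifIntegrable_div_natCast_of_isQueuePath (hQ0 : ∀ ω, 0 ≤ Q 0 ω)
    (hQ0_int : Integrable (Q 0) μ) (ha : ∀ t ω, 0 ≤ a t ω)
    (hqueue : ∀ ω, IsQueuePath (fun t => Q t ω) (fun t => a t ω) (fun t => b t ω))
    (hui : UniformIntegrable (fun t ω => a t ω - min (b t ω) 0) 1 μ) :
    UnifIntegrable (fun (t : ℕ) ω => Q t ω / t) 1 μ := by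
  have havg := uniformIntegrable_average_real le_rfl hui
  have hQ0_mem : MemLp (Q 0) 1 μ := memLp_one_iff_integrable.2 hQ0_int
  refine unifIntegrable_of_norm_le ((unifIntegrable_const le_rfl one_ne_top hQ0_mem).add
    havg.unifIntegrable le_rfl (fun _ => hQ0_mem.1) havg.aestronglyMeasurable)
    fun t => ae_of_all μ fun ω => ?_
  have hpath := (hqueue ω).div_le_add_average (hQ0 ω) (fun i => ha i ω) t
  have hQ_nonneg : 0 ≤ Q t ω / t :=
    div_nonneg ((hqueue ω).nonneg (hQ0 ω) (fun i => ha i ω) t) t.cast_nonneg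
  simpa only [Real.norm_eq_abs, Pi.add_apply, Pi.div_apply, Finset.sum_apply, Pi.natCast_apply]
    using abs_le_abs_of_nonneg hQ_nonneg hpath

theorem uniformIntegrable_sub_min_of_lintegral_rpow_le [IsFiniteMeasure μ] {ε : ℝ} (hε : 0 < ε)
    (ha_meas : ∀ t, AEMeasurable (a t) μ) (hb_meas : ∀ t, AEMeasurable (b t) μ)
    (ha : ∀ t ω, 0 ≤ a t ω) {C : ℝ≥0∞} (hC : C ≠ ∞)
    (hmom : ∀ t, ∫⁻ ω, ENNReal.ofReal ((a t ω - min (b t ω) 0) ^ (1 + ε)) ∂μ ≤ C) :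
    UniformIntegrable (fun t ω => a t ω - min (b t ω) 0) 1 μ := by
  have hgrowth : ∀ t ω, 0 ≤ a t ω - min (b t ω) 0 := fun t ω =>
    sub_nonneg.2 ((min_le_right _ _).trans (ha t ω))
  refine uniformIntegrable_of_lintegral_rpow_norm_le (r := 1 + ε) one_ne_zero
    (one_lt_ofReal.2 (lt_add_of_pos_right 1 hε)) (fun t => ?_) hC fun t => ?_
  · exact ((ha_meas t).sub ((hb_meas t).min aemeasurable_const)).aestronglyMeasurable
  · simpa only [Real.norm_of_nonneg (hgrowth t _)] using hmom t

theorem stmt1_general [IsFiniteMeasure μ] (hQ : ∀ t, AEStronglyMeasurable (Q t) μ)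
    (hQ0 : ∀ ω, 0 ≤ Q 0 ω) (hQ0_int : Integrable (Q 0) μ) (ha : ∀ t ω, 0 ≤ a t ω)
    (hqueue : ∀ ω, IsQueuePath (fun t => Q t ω) (fun t => a t ω) (fun t => b t ω))
    (hrate : RateStable Q μ)
    (hui : UniformIntegrable (fun t ω => a t ω - min (b t ω) 0) 1 μ) : MeanRateStable Q μ :=
  hrate.meanRateStable hQ (unifIntegrable_div_natCast_of_isQueuePath hQ0 hQ0_int ha hqueue hui)

end Stability

/-- Rate stability plus a uniform `(1+ε)`-moment bound on
`a(t) + b⁻(t)` (where `b⁻(t) = -min[b(t),0]`) implies mean rate stability. -/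
theorem stmt1 {Ω : Type*} [MeasurableSpace Ω] (μ : Measure Ω) [IsProbabilityMeasure μ]
    (Q a b : ℕ → Ω → ℝ)
    (hQmeas : ∀ t, Measurable (Q t))
    (hameas : ∀ t, Measurable (a t)) (hbmeas : ∀ t, Measurable (b t))
    (hQ0 : ∀ ω, Q 0 ω = 0) (ha : ∀ t ω, 0 ≤ a t ω)
    (hrec : ∀ t ω, Q (t + 1) ω = max (Q t ω - b t ω) 0 + a t ω)
    (hrate : ∀ᵐ ω ∂μ, Tendsto (fun t : ℕ => Q t ω / t) atTop (nhds 0))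
    (ε C : ℝ) (hε : 0 < ε) (hC : 0 < C)
    (hmom : ∀ t, ∫⁻ ω, ENNReal.ofReal ((a t ω - min (b t ω) 0) ^ (1 + ε)) ∂μ ≤ ENNReal.ofReal C) :
    Tendsto (fun t : ℕ => (∫⁻ ω, ENNReal.ofReal (Q t ω) ∂μ) / (t : ℝ≥0∞)) atTop (nhds 0) :=
  stmt1_general (fun t => (hQmeas t).aestronglyMeasurable) (fun ω => (hQ0 ω).ge)
    (by simp [funext hQ0]) ha (fun ω t => hrec t ω) hrate
    (uniformIntegrable_sub_min_of_lintegral_rpow_le hε (fun t => (hameas t).aemeasurable)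
      (fun t => (hbmeas t).aemeasurable) ha ofReal_ne_top hmom)
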